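/- arXiv:1005.4943 — 2 statements merged into one kernel-verified Lean document; each statement's English description precedes it below -/
import Mathlib

section
/- Let V : ℝ → ℝ be measurable with ∫_ℝ (1 + |t|) |V(t)| dt < ∞. Define η(u) = ∫_u^∞ |V(t)| dt, γ_1(x) = ∫_x^∞ (t - x) |V(t)| dt, and recursively K_0(x,y) = ∫_{x+y}^∞ V(t) dt and K_{n+1}(x,y) = ∫_0^y ∫_{x+y-z}^∞ V(t) K_n(t,z) dt dz. Then for every n ≥ 0 and all x ≥ 0, y ≥ 0, |K_n(x,y)| ≤ η(x + y) · γ_1(x)^n / n!. -/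
open MeasureTheory Set

/-- `η(u) = ∫_u^∞ |V(t)| dt`. -/
noncomputable def etaV (V : ℝ → ℝ) (u : ℝ) : ℝ := ∫ t in Ioi u, |V t|

/-- `γ₁(x) = ∫_x^∞ (t - x)|V(t)| dt`. -/
noncomputable def gammaOne (V : ℝ → ℝ) (x : ℝ) : ℝ := ∫ t in Ioi x, (t - x) * |V t|

/-- The Deift–Trubowitz iterates: `K₀(x,y) = ∫_{x+y}^∞ V(t) dt` and
`K_{n+1}(x,y) = ∫_0^y ∫_{x+y-z}^∞ V(t) Kₙ(t,z) dt dz`. -/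
noncomputable def DTiter (V : ℝ → ℝ) : ℕ → ℝ → ℝ → ℝ
  | 0, x, y => ∫ t in Ioi (x + y), V t
  | n + 1, x, y => ∫ z in Ioc (0 : ℝ) y, ∫ t in Ioi (x + y - z), V t * DTiter V n t z

/-!
Write `u = x + y - z`. In the inner integral `t > u`, hence `t + z > x + y`, so the inductive bound
on `Kₙ(t, z)` is at most `η(x + y) γ₁(u)ⁿ / n!` and integrating `|V|` contributes a factor `η(u)`.
Since `γ₁' = -η`, the integral of `γ₁ⁿ η` over `u ∈ [x, x + y]` is
`(γ₁(x)ⁿ⁺¹ - γ₁(x + y)ⁿ⁺¹) / (n + 1)`, and the denominator turns `n!` into `(n + 1)!`.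

For merely integrable `V` the identity `γ₁' = -η` is obtained from
`γ₁(u) = ∫_a^∞ (t - u)⁺ |V(t)| dt` for `u ≥ a`: the domain no longer depends on `u`, and the
integrand is Lipschitz in `u` with the integrable constant `|V(t)|`.
-/

section WeightedIntegrability

variable {E : Type*} [NormedAddCommGroup E] {μ : Measure ℝ} {f : ℝ → E}

lemma integrable_of_integrable_one_add_abs_mul_norm (hf : AEStronglyMeasurable f μ)
    (hf1 : Integrable (fun t => (1 + |t|) * ‖f t‖) μ) : Integrable f μ :=
  hf1.mono' hf (.of_forall fun t =>
    le_mul_of_one_le_left (norm_nonneg _) (le_add_of_nonneg_right (abs_nonneg t)))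

lemma integrable_id_smul_of_integrable_one_add_abs_mul_norm [NormedSpace ℝ E]
    (hf : AEStronglyMeasurable f μ) (hf1 : Integrable (fun t => (1 + |t|) * ‖f t‖) μ) :
    Integrable (fun t => t • f t) μ := by
  refine hf1.mono' (continuous_id.aestronglyMeasurable.smul hf) (.of_forall fun t => ?_)
  rw [norm_smul, Real.norm_eq_abs]
  gcongr
  exact le_add_of_nonneg_left zero_le_one

lemma integrable_posPart_sub_mul_norm [NormedSpace ℝ E] (hf : Integrable f μ)
    (hf' : Integrable (fun t => t • f t) μ) (u : ℝ) :
    Integrable (fun t => (t - u)⁺ * ‖f t‖) μ := by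
  refine (hf'.sub (hf.smul u)).mono ?_ (.of_forall fun t => ?_)
  · exact (continuous_posPart.comp (continuous_sub_right u)).aestronglyMeasurable.mul
      hf.norm.aestronglyMeasurable
  · simp only [Pi.sub_apply, Pi.smul_apply, ← sub_smul, norm_smul, norm_mul, norm_norm]
    gcongr
    rw [Real.norm_of_nonneg (posPart_nonneg _)]
    exact max_le (le_abs_self _) (abs_nonneg _)

end WeightedIntegrability

section TailMoment

lemma hasDerivAt_posPart_const_sub {t x : ℝ} (h : t ≠ x) :
    HasDerivAt (fun u => (t - u)⁺) ((Ioi x).indicator (fun _ => -1) t) x := by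
  rcases h.lt_or_gt with htx | hxt
  · rw [indicator_of_notMem (notMem_Ioi.2 htx.le)]
    refine (hasDerivAt_const x (0 : ℝ)).congr_of_eventuallyEq ?_
    filter_upwards [Ioi_mem_nhds htx] with u hu
    exact posPart_of_nonpos (sub_nonpos.2 (le_of_lt hu))
  · rw [indicator_of_mem (mem_Ioi.2 hxt)]
    refine ((hasDerivAt_id x).const_sub t).congr_of_eventuallyEq ?_
    filter_upwards [Iio_mem_nhds hxt] with u hu
    exact posPart_of_nonneg (sub_nonneg.2 (le_of_lt hu))

lemma hasDerivAt_integral_posPart_sub_smul {E : Type*} [NormedAddCommGroup E] [NormedSpace ℝ E]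
    {μ : Measure ℝ} [NullSingletonClass μ] {f : ℝ → E} {x : ℝ} (hf : Integrable f μ)
    (hfx : Integrable (fun t => (t - x)⁺ • f t) μ) :
    HasDerivAt (fun u => ∫ t, (t - u)⁺ • f t ∂μ) (-∫ t in Ioi x, f t ∂μ) x := by
  have hmeas : ∀ u, AEStronglyMeasurable (fun t => (t - u)⁺ • f t) μ := fun u =>
    (continuous_posPart.comp (continuous_sub_right u)).aestronglyMeasurable.smul
      hf.aestronglyMeasurable
  have hlip : ∀ t, LipschitzOnWith (Real.nnabs ‖f t‖) (fun u => (t - u)⁺ • f t) univ := by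
    refine fun t => LipschitzOnWith.of_dist_le_mul fun a _ b _ => ?_
    rw [dist_eq_norm, ← sub_smul, norm_smul, mul_comm, Real.coe_nnabs, abs_norm]
    gcongr
    calc ‖(t - a)⁺ - (t - b)⁺‖ = dist (t - a)⁺ (t - b)⁺ := (dist_eq_norm _ _).symm
      _ ≤ dist (t - a) (t - b) := by simpa using lipschitzWith_posPart.dist_le_mul (t - a) (t - b)
      _ = dist a b := dist_sub_left t a b
  have hderiv : ∀ᵐ t ∂μ, HasDerivAt (fun u => (t - u)⁺ • f t)
      ((Ioi x).indicator (fun t => -f t) t) x := by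
    filter_upwards [Measure.ae_ne μ x] with t ht
    convert (hasDerivAt_posPart_const_sub ht).smul_const (f t) using 1
    by_cases htx : t ∈ Ioi x <;> simp [htx]
  have key := (hasDerivAt_integral_of_dominated_loc_of_lip Filter.univ_mem (.of_forall hmeas) hfx
    (hf.neg.aestronglyMeasurable.indicator measurableSet_Ioi) (.of_forall hlip) hf.norm hderiv).2
  rwa [integral_indicator measurableSet_Ioi, integral_neg'] at key

end TailMoment

section EtaGamma

variable {V : ℝ → ℝ} {a b x : ℝ}

lemma etaV_nonneg (V : ℝ → ℝ) (u : ℝ) : 0 ≤ etaV V u :=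
  integral_nonneg fun _ => abs_nonneg _

lemma gammaOne_nonneg (V : ℝ → ℝ) (u : ℝ) : 0 ≤ gammaOne V u :=
  setIntegral_nonneg measurableSet_Ioi fun _ ht =>
    mul_nonneg (sub_nonneg.2 (le_of_lt ht)) (abs_nonneg _)

lemma antitoneOn_etaV (hV : IntegrableOn V (Ioi a)) : AntitoneOn (etaV V) (Ici a) :=
  fun _ hu _ _ huv => setIntegral_mono_set (hV.mono_set (Ioi_subset_Ioi hu)).abs
    (.of_forall fun _ => abs_nonneg _) (Ioi_subset_Ioi huv).eventuallyLE

lemma gammaOne_eq_setIntegral_posPart (h : a ≤ x) :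
    gammaOne V x = ∫ t in Ioi a, (t - x)⁺ * |V t| := by
  rw [gammaOne, setIntegral_eq_of_subset_of_forall_sdiff_eq_zero measurableSet_Ioi
    (Ioi_subset_Ioi h)]
  · refine setIntegral_congr_fun measurableSet_Ioi fun t ht => ?_
    rw [posPart_of_nonneg (sub_nonneg.2 (le_of_lt ht))]
  · intro t ht
    rw [posPart_of_nonpos (sub_nonpos.2 (notMem_Ioi.1 ht.2)), zero_mul]

lemma antitoneOn_gammaOne (hV : IntegrableOn V (Ioi a))
    (hV' : IntegrableOn (fun t => t * V t) (Ioi a)) : AntitoneOn (gammaOne V) (Ici a) := by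
  intro u hu v hv huv
  rw [gammaOne_eq_setIntegral_posPart hu, gammaOne_eq_setIntegral_posPart hv]
  refine integral_mono (integrable_posPart_sub_mul_norm hV hV' v)
    (integrable_posPart_sub_mul_norm hV hV' u) fun t => ?_
  exact mul_le_mul_of_nonneg_right (posPart_mono (sub_le_sub_left huv t)) (abs_nonneg _)

lemma hasDerivWithinAt_gammaOne (hV : IntegrableOn V (Ioi a))
    (hV' : IntegrableOn (fun t => t * V t) (Ioi a)) (hx : a ≤ x) :
    HasDerivWithinAt (gammaOne V) (-etaV V x) (Ici a) x := by
  have hderiv := hasDerivAt_integral_posPart_sub_smul hV.abs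
    (integrable_posPart_sub_mul_norm hV hV' x)
  rw [Measure.restrict_restrict measurableSet_Ioi,
    inter_eq_left.2 (Ioi_subset_Ioi hx)] at hderiv
  exact hderiv.hasDerivWithinAt.congr_of_mem
    (fun u hu => gammaOne_eq_setIntegral_posPart hu) hx

lemma antitoneOn_gammaOne_pow_mul_etaV (hV : IntegrableOn V (Ioi a))
    (hV' : IntegrableOn (fun t => t * V t) (Ioi a)) (n : ℕ) :
    AntitoneOn (fun u => gammaOne V u ^ n * etaV V u) (Ici a) := by
  intro u hu v hv huv
  have hγ := antitoneOn_gammaOne hV hV' hu hv huv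
  have hη := antitoneOn_etaV hV hu hv huv
  have hγ0 := gammaOne_nonneg V
  have hη0 := etaV_nonneg V
  exact mul_le_mul (pow_le_pow_left₀ (hγ0 v) hγ n) hη (hη0 v) (pow_nonneg (hγ0 u) n)

lemma intervalIntegrable_gammaOne_pow_mul_etaV (hab : a ≤ b) (hV : IntegrableOn V (Ioi a))
    (hV' : IntegrableOn (fun t => t * V t) (Ioi a)) (n : ℕ) :
    IntervalIntegrable (fun u => gammaOne V u ^ n * etaV V u) volume a b :=
  ((antitoneOn_gammaOne_pow_mul_etaV hV hV' n).mono
    (uIcc_of_le hab ▸ Icc_subset_Ici_self)).intervalIntegrable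

lemma integral_gammaOne_pow_mul_etaV (hab : a ≤ b) (hV : IntegrableOn V (Ioi a))
    (hV' : IntegrableOn (fun t => t * V t) (Ioi a)) (n : ℕ) :
    ∫ u in a..b, gammaOne V u ^ n * etaV V u =
      (gammaOne V a ^ (n + 1) - gammaOne V b ^ (n + 1)) / (n + 1) := by
  have hderiv : ∀ u ∈ Ici a, HasDerivWithinAt (fun u => -(gammaOne V u ^ (n + 1) / (n + 1)))
      (gammaOne V u ^ n * etaV V u) (Ici a) u := by
    intro u hu
    refine ((((hasDerivWithinAt_gammaOne hV hV' hu).fun_pow (n + 1)).div_const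
      ((n : ℝ) + 1)).fun_neg).congr_deriv ?_
    rw [Nat.cast_succ, Nat.add_sub_cancel]
    field_simp
  rw [intervalIntegral.integral_eq_sub_of_hasDeriv_right_of_le hab
    (fun u hu => (hderiv u hu.1).continuousWithinAt.mono Icc_subset_Ici_self)
    (fun u hu => (hderiv u hu.1.le).mono (Ioi_subset_Ici hu.1.le))
    (intervalIntegrable_gammaOne_pow_mul_etaV hab hV hV' n)]
  ring

end EtaGamma

section Iterates

variable {V : ℝ → ℝ} {x y : ℝ}

lemma abs_setIntegral_Ioi_mul_le_mul_etaV {g : ℝ → ℝ} {u C : ℝ} (hV : IntegrableOn V (Ioi u))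
    (hg : ∀ t ∈ Ioi u, |g t| ≤ C) : |∫ t in Ioi u, V t * g t| ≤ C * etaV V u := by
  rw [etaV, ← integral_const_mul, ← Real.norm_eq_abs]
  refine norm_integral_le_of_norm_le (hV.norm.const_mul C) ?_
  filter_upwards [ae_restrict_mem measurableSet_Ioi] with t ht
  rw [norm_mul, mul_comm]
  exact mul_le_mul_of_nonneg_right (hg t ht) (norm_nonneg _)

lemma abs_setIntegral_Ioi_mul_le_of_abs_le_etaV_mul_gammaOne_pow {g : ℝ → ℝ} {n : ℕ}
    {u z c : ℝ} (hV : IntegrableOn V (Ioi u)) (hV' : IntegrableOn (fun t => t * V t) (Ioi u))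
    (hz : 0 ≤ z) (hc : 0 ≤ c)
    (hg : ∀ t ∈ Ioi u, |g t| ≤ etaV V (t + z) * gammaOne V t ^ n / c) :
    |∫ t in Ioi u, V t * g t| ≤ etaV V (u + z) / c * (gammaOne V u ^ n * etaV V u) := by
  rw [← mul_assoc, div_mul_eq_mul_div]
  refine abs_setIntegral_Ioi_mul_le_mul_etaV hV fun t ht => (hg t ht).trans ?_
  have hut : u ≤ t := le_of_lt ht
  have hη : etaV V (t + z) ≤ etaV V (u + z) :=
    antitoneOn_etaV hV (le_add_of_nonneg_right hz) (by simp only [mem_Ici]; linarith) (by gcongr)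
  have hγ : gammaOne V t ≤ gammaOne V u :=
    antitoneOn_gammaOne hV hV' self_mem_Ici hut hut
  gcongr
  exacts [pow_nonneg (gammaOne_nonneg V t) n, etaV_nonneg V _, gammaOne_nonneg V t]

lemma abs_DTiter_succ_le {n : ℕ} (hV : IntegrableOn V (Ioi x))
    (hV' : IntegrableOn (fun t => t * V t) (Ioi x))
    (hK : ∀ t ∈ Ioi x, ∀ z, 0 ≤ z →
      |DTiter V n t z| ≤ etaV V (t + z) * gammaOne V t ^ n / n.factorial) (hy : 0 ≤ y) :
    |DTiter V (n + 1) x y| ≤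
      etaV V (x + y) / n.factorial * ∫ u in x..x + y, gammaOne V u ^ n * etaV V u := by
  have hxy : x ≤ x + y := le_add_of_nonneg_right hy
  have hsubst := intervalIntegral.integral_comp_sub_left (a := 0) (b := y)
    (fun u => gammaOne V u ^ n * etaV V u) (x + y)
  have hint := ((intervalIntegrable_gammaOne_pow_mul_etaV hxy hV hV' n).comp_sub_left (x + y)).symm
  rw [sub_zero, add_sub_cancel_right] at hsubst
  rw [sub_self, add_sub_cancel_left] at hint
  rw [← hsubst, ← intervalIntegral.integral_const_mul, DTiter, ← Real.norm_eq_abs,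
    ← intervalIntegral.integral_of_le hy]
  refine intervalIntegral.norm_integral_le_of_norm_le hy (.of_forall fun z hz => ?_)
    (hint.const_mul _)
  have hu : Ioi (x + y - z) ⊆ Ioi x := Ioi_subset_Ioi (by linarith [hz.2])
  simpa only [sub_add_cancel, Real.norm_eq_abs] using
    abs_setIntegral_Ioi_mul_le_of_abs_le_etaV_mul_gammaOne_pow (hV.mono_set hu) (hV'.mono_set hu)
      hz.1.le (Nat.cast_nonneg _) fun t ht => hK t (hu ht) z hz.1.le

theorem DT_iterate_bound_general (hV : IntegrableOn V (Ioi x))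
    (hV' : IntegrableOn (fun t => t * V t) (Ioi x)) (n : ℕ) (hy : 0 ≤ y) :
    |DTiter V n x y| ≤ etaV V (x + y) * gammaOne V x ^ n / n.factorial := by
  induction n generalizing x y with
  | zero => simpa [DTiter, etaV] using abs_integral_le_integral_abs
  | succ n ih =>
    have hη := etaV_nonneg V (x + y)
    have hγ := gammaOne_nonneg V (x + y)
    have hK : ∀ t ∈ Ioi x, ∀ z, 0 ≤ z →
        |DTiter V n t z| ≤ etaV V (t + z) * gammaOne V t ^ n / n.factorial := fun t ht _ hz =>
      have htx := Ioi_subset_Ioi (le_of_lt ht)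
      ih (hV.mono_set htx) (hV'.mono_set htx) hz
    calc |DTiter V (n + 1) x y|
        ≤ etaV V (x + y) / n.factorial * ∫ u in x..x + y, gammaOne V u ^ n * etaV V u :=
          abs_DTiter_succ_le hV hV' hK hy
      _ = etaV V (x + y) / n.factorial *
            ((gammaOne V x ^ (n + 1) - gammaOne V (x + y) ^ (n + 1)) / (n + 1)) := by
          rw [integral_gammaOne_pow_mul_etaV (le_add_of_nonneg_right hy) hV hV']
      _ ≤ etaV V (x + y) / n.factorial * (gammaOne V x ^ (n + 1) / (n + 1)) := by
          gcongr
          exact sub_le_self _ (pow_nonneg hγ _)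
      _ = etaV V (x + y) * gammaOne V x ^ (n + 1) / (n + 1).factorial := by
          rw [Nat.factorial_succ, Nat.cast_mul, Nat.cast_succ, div_mul_div_comm,
            mul_comm (n.factorial : ℝ)]

end Iterates

/-- Bound on the Deift–Trubowitz iterates: for `V` with `∫ (1+|t|)|V(t)| dt < ∞`,
`|Kₙ(x,y)| ≤ η(x+y) γ₁(x)ⁿ / n!` for all `n ≥ 0` and `x, y ≥ 0`. -/
theorem DT_iterate_bound (V : ℝ → ℝ) (hV : Measurable V)
    (hV1 : Integrable (fun t => (1 + |t|) * |V t|)) :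
    ∀ n : ℕ, ∀ x : ℝ, 0 ≤ x → ∀ y : ℝ, 0 ≤ y →
      |DTiter V n x y| ≤ etaV V (x + y) * gammaOne V x ^ n / n.factorial := by
  have hVi := integrable_of_integrable_one_add_abs_mul_norm hV.aestronglyMeasurable hV1
  have hVt := integrable_id_smul_of_integrable_one_add_abs_mul_norm hV.aestronglyMeasurable hV1
  exact fun n _ _ _ hy => DT_iterate_bound_general hVi.integrableOn hVt.integrableOn n hy
end

section
/- Let q ≠ 0 and L > 0 be real numbers with qL ≠ 1/2, and for real k ≠ 0 define t_{q,L}(k) = k^2 e^{-2ikL}/D_{q,L}(k) with D_{q,L}(k) = q^2 e^{2ikL} - (ik+q)^2 e^{-2ikL} (nonzero for k ≠ 0). Then lim_{k→0} t_{q,L}(k) = 0 and lim_{k→0} t_{q,L}(k)/k = -i/(2q(2qL - 1)); that is, the non-resonant double Dirac delta potential is generic, with T(k) = αk + o(k) as k → 0 where α = -i/(2q(2qL - 1)). -/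
open Complex Filter Topology

open Complex

/-- The denominator `D_{q,L}(k) = q² e^{2ikL} - (ik + q)² e^{-2ikL}` for the double Dirac
delta potential of strength `q` at `x = ±L`. -/
noncomputable def doubleDeltaD (q L k : ℝ) : ℂ :=
  (q : ℂ) ^ 2 * Complex.exp (2 * I * k * L) - (I * k + q) ^ 2 * Complex.exp (-(2 * I * k * L))

/-- Transmission coefficient `t_{q,L}(k) = k² e^{-2ikL} / D_{q,L}(k)`. -/
noncomputable def doubleDeltaT (q L k : ℝ) : ℂ :=
  (k : ℂ) ^ 2 * Complex.exp (-(2 * I * k * L)) / doubleDeltaD q L k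


/-! The numerator of `doubleDeltaT` vanishes to second order at `k = 0`, while `doubleDeltaD` has
derivative `2iq(2qL - 1)` there, so off resonance its zero is simple and the quotient vanishes
to exactly first order. -/

section SimpleZero

variable {𝕜 F : Type*} [NontriviallyNormedField 𝕜] [NormedField F] [NormedAlgebra 𝕜 F]

theorem tendsto_sub_smul_div_of_hasDerivAt {f g : 𝕜 → F} {f' : F} {a : 𝕜}
    (hf : HasDerivAt f f' a) (hfa : f a = 0) (hf' : f' ≠ 0) (hg : ContinuousAt g a) :
    Tendsto (fun x => (x - a) • g x / f x) (𝓝[≠] a) (𝓝 (g a / f')) := by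
  have hslope : ∀ x, g x / slope f a x = (x - a) • g x / f x := fun x => by
    rw [slope_def_module, hfa, sub_zero, div_eq_mul_inv, smul_inv₀, inv_inv, mul_smul_comm,
      ← smul_mul_assoc, ← div_eq_mul_inv]
  exact (hg.continuousWithinAt.tendsto.div hf.tendsto_slope hf').congr hslope

end SimpleZero

section DoubleDelta

variable (q L k : ℝ)

theorem doubleDeltaD_zero : doubleDeltaD q L 0 = 0 := by
  simp [doubleDeltaD]

theorem hasDerivAt_doubleDeltaD :
    HasDerivAt (doubleDeltaD q L)
      (2 * I * L * q ^ 2 * exp (2 * I * k * L)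
        - 2 * I * (I * k + q) * (1 - L * (I * k + q)) * exp (-(2 * I * k * L))) k := by
  have hk : HasDerivAt (fun k : ℝ => (k : ℂ)) 1 k := ofRealCLM.hasDerivAt
  have hphase : HasDerivAt (fun k : ℝ => 2 * I * k * L) (2 * I * 1 * L) k :=
    (hk.const_mul (2 * I)).mul_const (L : ℂ)
  have hfactor : HasDerivAt (fun k : ℝ => I * k + q) (I * 1) k :=
    (hk.const_mul I).add_const (q : ℂ)
  refine ((hphase.cexp.const_mul ((q : ℂ) ^ 2)).sub
    ((hfactor.pow 2).mul hphase.neg.cexp)).congr_deriv ?_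
  simp only [Pi.pow_apply, Pi.neg_apply]
  push_cast
  ring

theorem hasDerivAt_doubleDeltaD_zero :
    HasDerivAt (doubleDeltaD q L) (2 * I * q * (2 * q * L - 1)) 0 := by
  refine (hasDerivAt_doubleDeltaD q L 0).congr_deriv ?_
  simp only [ofReal_zero, mul_zero, zero_mul, neg_zero, exp_zero, zero_add]
  ring

theorem doubleDeltaT_eq_mul :
    doubleDeltaT q L k = k * (k * exp (-(2 * I * k * L)) / doubleDeltaD q L k) := by
  rw [doubleDeltaT]
  ring

variable {q L}

theorem tendsto_mul_exp_div_doubleDeltaD (hq : q ≠ 0) (hres : q * L ≠ 1 / 2) :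
    Tendsto (fun k : ℝ => k * exp (-(2 * I * k * L)) / doubleDeltaD q L k) (𝓝[≠] 0)
      (𝓝 (-I / (2 * q * (2 * q * L - 1)))) := by
  have hfactor : (2 * q * L - 1 : ℂ) ≠ 0 := by
    have : 2 * q * L - 1 ≠ 0 := fun h => hres (by linarith)
    exact_mod_cast this
  have hderiv : 2 * I * q * (2 * q * L - 1) ≠ 0 :=
    mul_ne_zero (mul_ne_zero (mul_ne_zero two_ne_zero I_ne_zero) (ofReal_ne_zero.mpr hq)) hfactor
  have hexp : ContinuousAt (fun k : ℝ => exp (-(2 * I * k * L))) 0 := by fun_prop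
  have hlim := tendsto_sub_smul_div_of_hasDerivAt (hasDerivAt_doubleDeltaD_zero q L)
    (doubleDeltaD_zero q L) hderiv hexp
  have hvalue : 1 / (2 * I * q * (2 * q * L - 1)) = -I / (2 * q * (2 * q * L - 1)) := by
    rw [show 2 * I * q * (2 * q * L - 1) = I * (2 * q * (2 * q * L - 1)) by ring,
      div_mul_eq_div_div, one_div, inv_I]
  simpa only [sub_zero, real_smul, ofReal_zero, mul_zero, zero_mul, neg_zero, exp_zero,
    hvalue] using hlim

end DoubleDelta

/-- The non-resonant (`qL ≠ 1/2`) double Dirac delta potential is generic: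
`t_{q,L}(k) → 0` and `t_{q,L}(k)/k → -i/(2q(2qL - 1))` as `k → 0`. -/
theorem double_delta_generic (q L : ℝ) (hq : q ≠ 0) (hL : 0 < L) (hres : q * L ≠ 1 / 2) :
    Tendsto (fun k : ℝ => doubleDeltaT q L k) (𝓝[≠] 0) (𝓝 0) ∧
    Tendsto (fun k : ℝ => doubleDeltaT q L k / k) (𝓝[≠] 0)
      (𝓝 (-I / (2 * q * (2 * q * L - 1)))) := by
  have hquot := tendsto_mul_exp_div_doubleDeltaD hq hres
  constructor
  · have hk : Tendsto (fun k : ℝ => (k : ℂ)) (𝓝[≠] 0) (𝓝 0) :=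
      (continuous_ofReal.tendsto' 0 0 ofReal_zero).mono_left nhdsWithin_le_nhds
    simpa only [doubleDeltaT_eq_mul, zero_mul] using hk.mul hquot
  · refine hquot.congr' ?_
    filter_upwards [self_mem_nhdsWithin] with k hk
    rw [doubleDeltaT_eq_mul, mul_div_cancel_left₀ _ (ofReal_ne_zero.mpr hk)]
end
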